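/- Let a, b be finite tuples from L, let p be a Kolchin polynomial of (a,b) over K, q a Kolchin polynomial of a over K, and r a Kolchin polynomial of b over K⟨a⟩. If deg q = deg r, then deg p = deg q and the typical differential dimensions add: (deg p)!·leadingCoeff(p) = (deg q)!·leadingCoeff(q) + (deg r)!·leadingCoeff(r), i.e., α((a,b)/K) = α(a/K) + α(b/K⟨a⟩). -/

import Mathlib

open Polynomial

/-- Iterated application of the derivations `δ` according to the multi-exponent `e`:
`x ↦ δ₁^[e 1] (δ₂^[e 2] (⋯ (δ_m^[e m] x)))`. -/
def thetaApply {L : Type*} {m : ℕ} (δ : Fin m → L → L) (e : Fin m → ℕ) : L → L :=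
  (List.ofFn (fun i => (δ i)^[e i])).foldr (· ∘ ·) id

/-- A subfield of `L` is a differential subfield if it is closed under each derivation. -/
def IsDiffSubfield {L : Type*} [Field L] {m : ℕ} (δ : Fin m → L → L) (K : Subfield L) : Prop :=
  ∀ i : Fin m, ∀ x ∈ K, δ i x ∈ K

/-- The transcendence degree (as a natural number) of an intermediate field over the base. -/
noncomputable def trdegNat {L : Type*} [Field L] (K : Subfield L) (E : IntermediateField K L) : ℕ :=
  (⨆ s : {s : Set E // AlgebraicIndependent K ((↑) : s → E)}, Cardinal.mk s.1).toNat

/-- `T_{η/K}(s)`: the transcendence degree over `K` of the subfield of `L` generated by `K`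
together with all `δ₁^(e 1) ⋯ δ_m^(e m) (η j)` with `e 1 + ⋯ + e m ≤ s`. -/
noncomputable def diffTrdeg {L : Type*} [Field L] {m n : ℕ} (δ : Fin m → L → L) (K : Subfield L)
    (η : Fin n → L) (s : ℕ) : ℕ :=
  trdegNat K (IntermediateField.adjoin K
    {x : L | ∃ e : Fin m → ℕ, (∑ i, e i) ≤ s ∧ ∃ j : Fin n, x = thetaApply δ e (η j)})

/-- `p` is a Kolchin polynomial of `η` over `K` if `p(s) = T_{η/K}(s)` for all large `s`. -/
def IsKolchinPoly {L : Type*} [Field L] {m n : ℕ} (δ : Fin m → L → L) (K : Subfield L)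
    (η : Fin n → L) (p : ℚ[X]) : Prop :=
  ∃ s₀ : ℕ, ∀ s : ℕ, s₀ ≤ s → p.eval (s : ℚ) = (diffTrdeg δ K η s : ℚ)

/-- `K⟨S⟩`: the smallest differential subfield of `L` containing `K` and `S`. -/
def diffAdjoin {L : Type*} [Field L] {m : ℕ} (δ : Fin m → L → L) (K : Subfield L)
    (S : Set L) : Subfield L :=
  sInf {F : Subfield L | IsDiffSubfield δ F ∧ K ≤ F ∧ S ⊆ F}

/-!
The transcendence degree over `K` is the rank `rk_K` in the algebraic matroid of `L` over `K`, so
the theorem compares ranks of the finite sets `Θ_s(η)` of derivatives of order at most `s`.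
Since `Θ_s(a) ⊆ K⟨a⟩`, we have `rk_K Θ_s(a) + rk_{K⟨a⟩} Θ_s(b) ≤ rk_K (Θ_s(a) ∪ Θ_s(b))`.

Conversely, rank the derivatives of `b` orderly. If one of them is algebraic over `K⟨a⟩` together
with the lower ones, it is already algebraic over `K`, the lower ones and some `Θ_c(a)`; applying
`δᵢ` to this relation gives one for the next derivative, with `c + 1` in place of `c`. By Dickson's
lemma every relation is obtained in this way from finitely many, so that one `c` suffices, and
`rk_K (Θ_s(a) ∪ Θ_s(b)) ≤ rk_K Θ_{s+c}(a) + rk_{K⟨a⟩} Θ_s(b)` for all `s`.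

Hence `q(s) + r(s) ≤ p(s) ≤ q(s + c) + r(s)` for large `s`, and `q(X + c) - q(X)` has lower degree
than `q` unless it vanishes.
-/

open AlgebraicIndependent Filter

section Matroid

open scoped Matroid

variable {α ι R : Type*} {M N : Matroid α} {A : Set α}

theorem eRk_add_eRk_le_eRk_union (hE : N.E ⊆ M.E)
    (h : ∀ X, M.closure (X ∪ A) ⊆ N.closure X) (B : Set α) :
    M.eRk A + N.eRk B ≤ M.eRk (A ∪ B) := by
  obtain ⟨I, hI⟩ := M.exists_isBasis' A
  obtain ⟨J, hJ⟩ := N.exists_isBasis' B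
  have hJE : J ⊆ M.E := hJ.indep.subset_ground.trans hE
  have hJcl : ∀ e ∈ J, e ∉ M.closure (J \ {e} ∪ A) := fun e he heA ↦
    hJ.indep.notMem_closure_sdiff_of_mem he (h _ heA)
  have hJA : Disjoint J A := Set.disjoint_left.2 fun e he heA ↦
    hJcl e he (M.mem_closure_of_mem' (Or.inr heA) (hJE he))
  have hJind : (M ／ A).Indep J := by
    rw [Matroid.indep_iff_forall_notMem_closure_sdiff (Set.subset_sdiff.2 ⟨hJE, hJA⟩)]
    intro e he
    rw [Matroid.contract_closure_eq]
    exact fun h' ↦ hJcl e he h'.1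
  rw [← hI.encard_eq_eRk, ← hJ.encard_eq_eRk,
    ← Set.encard_union_eq (hJA.mono_right hI.subset).symm, Set.union_comm I J, Set.union_comm A B]
  exact (hI.contract_indep_iff.1 hJind).1.encard_le_eRk_of_subset
    (Set.union_subset_union hJ.subset hI.subset)

theorem eRk_insert_add_le {B : Set α} {x : α} (hx : x ∈ N.E)
    (h : x ∈ N.closure B → x ∈ M.closure (A ∪ B))
    (hB : M.eRk (A ∪ B) ≤ M.eRk A + N.eRk B) :
    M.eRk (A ∪ insert x B) ≤ M.eRk A + N.eRk (insert x B) := by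
  rw [Set.union_insert]
  by_cases hxB : x ∈ N.closure B
  · rw [← M.eRk_closure_eq, Matroid.closure_insert_eq_of_mem_closure (h hxB), M.eRk_closure_eq]
    exact hB.trans (add_le_add_right (N.eRk_mono (Set.subset_insert x B)) _)
  · rw [Matroid.eRk_insert_eq_add_one ⟨hx, hxB⟩, ← add_assoc]
    exact (M.eRk_insert_le_add_one x _).trans (by gcongr)

theorem eRk_union_image_le [LinearOrder R] {rk : ι → R} (hrk : Function.Injective rk)
    {v : ι → α} (hv : ∀ k, v k ∈ N.E) {S : Finset ι} (hS : ∀ k ∈ S, ∀ i, rk i < rk k → i ∈ S)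
    (h : ∀ k ∈ S, v k ∈ N.closure (v '' {i | rk i < rk k}) →
      v k ∈ M.closure (A ∪ v '' {i | rk i < rk k})) :
    M.eRk (A ∪ v '' S) ≤ M.eRk A + N.eRk (v '' S) := by
  classical
  induction S using Finset.induction_on_max_value rk with
  | empty => simp
  | insert k S hkS hmax ih =>
    have hlt : ∀ i ∈ S, rk i < rk k := fun i hi ↦ (hmax i hi).lt_of_ne fun h ↦ hkS (hrk h ▸ hi)
    have hSk : {i | rk i < rk k} = S := Set.ext fun i ↦
      ⟨fun hi ↦ Finset.mem_of_mem_insert_of_ne (hS k (Finset.mem_insert_self k S) i hi)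
        (ne_of_apply_ne rk hi.ne), hlt i⟩
    have hk := h k (Finset.mem_insert_self k S)
    rw [hSk] at hk
    rw [Finset.coe_insert, Set.image_insert_eq]
    exact eRk_insert_add_le (hv k) hk (ih (fun l hl i hi ↦ hSk.le (hi.trans (hlt l hl)))
      fun l hl ↦ h l (Finset.mem_insert_of_mem hl))

end Matroid

section AlgebraicMatroid

theorem matroid_comap_algHom {R A B : Type*} [CommRing R] [CommRing A] [CommRing B]
    [Algebra R A] [Algebra R B] [FaithfulSMul R A] [FaithfulSMul R B] [NoZeroDivisors A]
    [NoZeroDivisors B] {f : A →ₐ[R] B} (hf : Function.Injective f) :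
    (matroid R B).comap f = matroid R A :=
  Matroid.ext_indep rfl fun I _ ↦ by
    rw [Matroid.comap_indep_iff, and_iff_left hf.injOn, matroid_indep_iff, matroid_indep_iff,
      AlgebraicIndepOn, AlgebraicIndepOn, ← f.algebraicIndependent_iff hf]
    exact (algebraicIndependent_image hf.injOn).symm

theorem toENat_trdeg_eq_eRk_range {R A B : Type*} [CommRing R] [CommRing A] [CommRing B]
    [Algebra R A] [Algebra R B] [FaithfulSMul R A] [FaithfulSMul R B] [NoZeroDivisors A]
    [NoZeroDivisors B] (f : A →ₐ[R] B) (hf : Function.Injective f) :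
    (Algebra.trdeg R A).toENat = (matroid R B).eRk (Set.range f) := by
  rw [← matroid_cRank_eq, Matroid.toENat_cRank_eq, Matroid.eRank_def, ← matroid_comap_algHom hf,
    Matroid.eRk_comap]
  simp

variable {L : Type*} [Field L] {K F G : Subfield L} {S T : Set L} {x : L}

theorem isAlgebraic_of_subfield_le (h : F ≤ G) (hx : IsAlgebraic F x) : IsAlgebraic G x := by
  let := (Subfield.inclusion h).toAlgebra
  have : IsScalarTower F G L := .of_algebraMap_eq fun _ ↦ rfl
  exact hx.tower_top G

open scoped IntermediateField.algebraAdjoinAdjoin in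
theorem matroid_closure_eq_algebraicClosure_adjoin {F E : Type*} [Field F] [Field E] [Algebra F E]
    (S : Set E) :
    (matroid F E).closure S = algebraicClosure (IntermediateField.adjoin F S) E := by
  ext x
  rw [matroid_closure_eq, SetLike.mem_coe, Subalgebra.mem_algebraicClosure,
    IsFractionRing.isAlgebraic_iff (Algebra.adjoin F S) (IntermediateField.adjoin F S) E]
  exact mem_algebraicClosure_iff.symm

theorem adjoin_subset_matroid_closure {F E : Type*} [Field F] [Field E] [Algebra F E] (S : Set E) :
    (IntermediateField.adjoin F S : Set E) ⊆ (matroid F E).closure S := by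
  rw [matroid_closure_eq_algebraicClosure_adjoin]
  exact fun x hx ↦ (algebraicClosure (IntermediateField.adjoin F S) E).algebraMap_mem ⟨x, hx⟩

theorem toENat_trdeg_adjoin_eq_eRk {F E : Type*} [Field F] [Field E] [Algebra F E] (S : Set E) :
    (Algebra.trdeg F (IntermediateField.adjoin F S)).toENat = (matroid F E).eRk S := by
  rw [toENat_trdeg_eq_eRk_range (IntermediateField.adjoin F S).val Subtype.val_injective,
    IntermediateField.coe_val, Subtype.range_coe]
  refine le_antisymm ?_ ((matroid F E).eRk_mono (IntermediateField.subset_adjoin F S))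
  rw [← (matroid F E).eRk_closure_eq S]
  exact (matroid F E).eRk_mono (adjoin_subset_matroid_closure S)

theorem trdegNat_adjoin_eq_eRk (K : Subfield L) (hS : S.Finite) :
    (trdegNat K (IntermediateField.adjoin K S) : ℕ∞) = (matroid K L).eRk S := by
  have hfin : (matroid K L).eRk S ≠ ⊤ :=
    ((Matroid.eRk_le_encard _ _).trans_lt hS.encard_lt_top).ne
  rw [← ENat.natCast_toNat hfin, ← toENat_trdeg_adjoin_eq_eRk, Cardinal.toNat_toENat]
  rfl

theorem mem_matroid_closure_iff :
    x ∈ (matroid K L).closure S ↔ IsAlgebraic (Subfield.closure ((K : Set L) ∪ S)) x := by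
  have h : (IntermediateField.adjoin K S).toSubfield = Subfield.closure ((K : Set L) ∪ S) := by
    rw [IntermediateField.adjoin_toSubfield]
    congr
    exact Subtype.range_coe
  rw [matroid_closure_eq_algebraicClosure_adjoin, ← h]
  exact mem_algebraicClosure_iff

theorem matroid_closure_subset_of_le (hK : K ≤ Subfield.closure ((F : Set L) ∪ T))
    (hS : S ⊆ Subfield.closure ((F : Set L) ∪ T)) :
    (matroid K L).closure S ⊆ (matroid F L).closure T := fun x hx ↦ by
  rw [mem_matroid_closure_iff] at hx ⊢
  exact isAlgebraic_of_subfield_le (Subfield.closure_le.2 (Set.union_subset hK hS)) hx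

theorem eRk_add_eRk_le_eRk_union_of_subset (hKF : K ≤ F) (hSF : S ⊆ F) (T : Set L) :
    (matroid K L).eRk S + (matroid F L).eRk T ≤ (matroid K L).eRk (S ∪ T) :=
  eRk_add_eRk_le_eRk_union (by simp) (fun X ↦ matroid_closure_subset_of_le
    (fun _ hx ↦ Subfield.subset_closure (Or.inl (hKF hx)))
    (Set.union_subset (fun _ hx ↦ Subfield.subset_closure (Or.inr hx))
      fun _ hx ↦ Subfield.subset_closure (Or.inl (hSF hx)))) T

end AlgebraicMatroid

section Derivation

variable {L : Type*} [Field L]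

theorem exists_derivation_coe_eq {R : Type*} [CommRing R] {d : R → R}
    (hadd : ∀ x y, d (x + y) = d x + d y) (hleib : ∀ x y, d (x * y) = x * d y + d x * y) :
    ∃ D : Derivation ℤ R R, ⇑D = d :=
  ⟨.mk' (AddMonoidHom.mk' d hadd).toIntLinearMap fun x y ↦ by simp [hleib, mul_comm], rfl⟩

variable {D : Derivation ℤ L L} {E G : Subfield L} {S : Set L} {x : L}

theorem derivation_mem_of_mem_subfieldClosure (hS : S ⊆ E) (hD : ∀ y ∈ S, D y ∈ E)
    (hx : x ∈ Subfield.closure S) : D x ∈ E := by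
  have hE : Subfield.closure S ≤ E := Subfield.closure_le.2 hS
  induction hx using Subfield.closure_induction with
  | mem y hy => exact hD y hy
  | one => simp
  | add y z _ _ hy hz => simpa using E.add_mem hy hz
  | neg y _ hy => simpa using hy
  | inv y hyS hy =>
    rw [D.leibniz_inv]
    exact E.mul_mem (E.neg_mem (E.pow_mem (E.inv_mem (hE hyS)) 2)) hy
  | mul y z hyS hzS hy hz =>
    rw [D.leibniz]
    exact E.add_mem (E.mul_mem (hE hyS) hz) (E.mul_mem (hE hzS) hy)

theorem derivation_mem_of_isAlgebraic [CharZero L] (hGE : G ≤ E) (hG : ∀ y ∈ G, D y ∈ E)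
    (hxE : x ∈ E) (hx : IsAlgebraic G x) : D x ∈ E := by
  -- Apply `D` to `f(x) = 0`: `f'(x) D x = -f^D(x)`, where `f^D` is `f` with `D` applied to its
  -- coefficients, and `f'(x) ≠ 0` by separability.
  set f := (minpoly G x).map (algebraMap G L)
  have hsep : f.derivative.eval x ≠ 0 := by
    rw [derivative_map, eval_map_algebraMap]
    exact (minpoly.irreducible hx.isIntegral).separable.aeval_derivative_ne_zero (minpoly.aeval G x)
  have hzero : PolynomialModule.eval x (D.mapCoeffs f) + f.derivative.eval x * D x = 0 := by
    rw [← smul_eq_mul, ← D.apply_eval_eq, eval_map_algebraMap, minpoly.aeval, D.map_zero]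
  have hf : ∀ i, f.coeff i ∈ G := fun i ↦ by
    rw [coeff_map]
    exact Subtype.property _
  have hpoly : PolynomialModule.eval x (D.mapCoeffs f) ∈ E :=
    E.sum_mem fun i _ ↦ E.mul_mem (E.pow_mem hxE i) (hG _ (hf i))
  have hderiv : f.derivative.eval x ∈ E := by
    simp only [eval_eq_sum_range, coeff_derivative, ← Nat.cast_add_one]
    exact E.sum_mem fun i _ ↦
      E.mul_mem (E.mul_mem (hGE (hf _)) (natCast_mem E _)) (E.pow_mem hxE i)
  rw [← inv_mul_cancel_left₀ hsep (D x), eq_neg_of_add_eq_zero_right hzero]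
  exact E.mul_mem (E.inv_mem hderiv) (E.neg_mem hpoly)

theorem derivation_mem_matroid_closure [CharZero L] {K : Subfield L} {T : Set L}
    (hK : ∀ x ∈ K, D x ∈ K) (hST : S ⊆ (matroid K L).closure T)
    (hDST : ∀ x ∈ S, D x ∈ (matroid K L).closure T) (hx : x ∈ (matroid K L).closure S) :
    D x ∈ (matroid K L).closure T := by
  have hxT := (matroid K L).closure_subset_closure_of_subset_closure hST hx
  set A := algebraicClosure (IntermediateField.adjoin K T) L
  have hA : (matroid K L).closure T = A.toSubfield := matroid_closure_eq_algebraicClosure_adjoin T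
  rw [hA] at hST hDST hxT ⊢
  have hKA : (K : Set L) ⊆ A.toSubfield := fun y hy ↦
    A.algebraMap_mem ⟨y, (IntermediateField.adjoin K T).algebraMap_mem ⟨y, hy⟩⟩
  have hKS : (K : Set L) ∪ S ⊆ A.toSubfield := Set.union_subset hKA hST
  have hD : ∀ y ∈ (K : Set L) ∪ S, D y ∈ A.toSubfield := by
    rintro y (hy | hy)
    exacts [hKA (hK y hy), hDST y hy]
  exact derivation_mem_of_isAlgebraic (Subfield.closure_le.2 hKS)
    (fun y ↦ derivation_mem_of_mem_subfieldClosure hKS hD) hxT (mem_matroid_closure_iff.1 hx)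

end Derivation

section Dickson

theorem exists_forall_exists_le_of_monotone {α β : Type*} [PartialOrder α] [WellQuasiOrderedLE α]
    [Preorder β] [IsDirectedOrder β] [Nonempty β] {P : β → α → Prop} (hP : Monotone P) :
    ∃ c, ∀ c' x, P c' x → ∃ y ≤ x, P c y := by
  set E : Set α := {x | ∃ c, P c x}
  have hfin : {x | Minimal (· ∈ E) x}.Finite :=
    WellQuasiOrderedLE.finite_of_isAntichain (setOfPred_minimal_antichain _)
  choose! c hc using fun x (hx : x ∈ E) ↦ hx
  obtain ⟨C, hC⟩ := (hfin.image c).bddAbove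
  refine ⟨C, fun c' x hx ↦ ?_⟩
  obtain ⟨y, hyx, hy⟩ := exists_minimal_le_of_wellFoundedLT (· ∈ E) x ⟨c', hx⟩
  exact ⟨y, hyx, hP (hC (Set.mem_image_of_mem c hy)) y (hc y hy.prop)⟩

end Dickson

section Theta

variable {L : Type*} {m n : ℕ}

theorem thetaApply_succ (δ : Fin (m + 1) → L → L) (e : Fin (m + 1) → ℕ) (x : L) :
    thetaApply δ e x = (δ 0)^[e 0] (thetaApply (δ ∘ Fin.succ) (e ∘ Fin.succ) x) := by
  simp [thetaApply, List.ofFn_succ]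

theorem thetaApply_zero (δ : Fin m → L → L) (x : L) : thetaApply δ 0 x = x := by
  induction m with
  | zero => simp [thetaApply]
  | succ m ih =>
    rw [thetaApply_succ]
    exact ih _

theorem thetaApply_add_single {δ : Fin m → L → L} (hcomm : ∀ i j, Function.Commute (δ i) (δ j))
    (e : Fin m → ℕ) (i : Fin m) (x : L) :
    thetaApply δ (e + Pi.single i 1) x = δ i (thetaApply δ e x) := by
  induction m with
  | zero => exact i.elim0
  | succ m ih =>
    rw [thetaApply_succ, thetaApply_succ δ e]
    cases i using Fin.cases with
    | zero =>
      rw [← Function.iterate_succ_apply' (δ 0)]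
      congr 2
    | succ i =>
      have hhead : (e + Pi.single i.succ 1 : Fin (m + 1) → ℕ) 0 = e 0 := by simp
      have htail : (e + Pi.single i.succ 1 : Fin (m + 1) → ℕ) ∘ Fin.succ =
          e ∘ Fin.succ + Pi.single i 1 := by
        funext j
        simp [Pi.single_apply]
      rw [hhead, htail, ih (δ := δ ∘ Fin.succ) fun _ _ ↦ hcomm _ _]
      exact (hcomm 0 i.succ).iterate_left (e 0) _

theorem exponent_induction {P : (Fin m → ℕ) → Prop} (zero : P 0)
    (add_single : ∀ e i, P e → P (e + Pi.single i 1)) (e : Fin m → ℕ) : P e := by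
  suffices h : ∀ e₀, P e₀ → P (e₀ + e) by simpa using h 0 zero
  induction e using Pi.single_induction with
  | zero => simp
  | add f g hf hg => exact fun e₀ he₀ ↦ add_assoc e₀ f g ▸ hg _ (hf _ he₀)
  | single i d =>
    induction d with
    | zero => simp
    | succ d ih =>
      intro e₀ he₀
      rw [Pi.single_add, ← add_assoc]
      exact add_single _ i (ih e₀ he₀)

theorem sum_add_single (e : Fin m → ℕ) (i : Fin m) :
    ∑ l, (e + Pi.single i 1 : Fin m → ℕ) l = ∑ l, e l + 1 := by
  simp [Finset.sum_add_distrib]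

/-- The derivative `δ₁^(e 1) ⋯ δ_m^(e m) (η j)` of the family `η`, indexed by the pair
`k = (e, j)`. -/
def derivOf (δ : Fin m → L → L) (η : Fin n → L) (k : (Fin m → ℕ) × Fin n) : L :=
  thetaApply δ k.1 (η k.2)

/-- The set of derivatives of the family `η` of order at most `s`, whose transcendence degree is
`T_{η/K}(s)`. -/
def thetaSet (δ : Fin m → L → L) (η : Fin n → L) (s : ℕ) : Set L :=
  derivOf δ η '' {k | ∑ i, k.1 i ≤ s}

variable {δ : Fin m → L → L} {η : Fin n → L}

theorem thetaSet_eq_setOf (s : ℕ) :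
    thetaSet δ η s =
      {x | ∃ e : Fin m → ℕ, ∑ i, e i ≤ s ∧ ∃ j : Fin n, x = thetaApply δ e (η j)} :=
  Set.ext fun _ ↦ ⟨fun ⟨k, hk, hx⟩ ↦ ⟨k.1, hk, k.2, hx.symm⟩,
    fun ⟨e, he, j, hx⟩ ↦ ⟨(e, j), he, hx.symm⟩⟩

theorem finite_setOf_order_le (s : ℕ) : {k : (Fin m → ℕ) × Fin n | ∑ i, k.1 i ≤ s}.Finite :=
  ((Set.finite_Iic fun _ ↦ s).prod Set.finite_univ).subset fun _ hk ↦
    ⟨fun i ↦ (Finset.single_le_sum_of_canonicallyOrdered (Finset.mem_univ i)).trans hk, trivial⟩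

theorem thetaSet_finite (s : ℕ) : (thetaSet δ η s).Finite :=
  (finite_setOf_order_le s).image _

theorem thetaSet_mono : Monotone (thetaSet δ η) :=
  fun _ _ hst ↦ Set.image_mono fun _ hk ↦ hk.trans hst

theorem thetaSet_append {n' : ℕ} {ξ : Fin n' → L} (s : ℕ) :
    thetaSet δ (Fin.append η ξ) s = thetaSet δ η s ∪ thetaSet δ ξ s := by
  refine Set.Subset.antisymm ?_ (Set.union_subset ?_ ?_)
  · rintro _ ⟨⟨e, j⟩, he, rfl⟩
    cases j using Fin.addCases with
    | left j => exact Or.inl ⟨(e, j), he, by simp [derivOf]⟩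
    | right j => exact Or.inr ⟨(e, j), he, by simp [derivOf]⟩
  · rintro _ ⟨⟨e, j⟩, he, rfl⟩
    exact ⟨(e, Fin.castAdd n' j), he, by simp [derivOf]⟩
  · rintro _ ⟨⟨e, j⟩, he, rfl⟩
    exact ⟨(e, Fin.natAdd n j), he, by simp [derivOf]⟩

theorem derivOf_add_single (hcomm : ∀ i j, Function.Commute (δ i) (δ j))
    (k : (Fin m → ℕ) × Fin n) (i : Fin m) :
    derivOf δ η (k.1 + Pi.single i 1, k.2) = δ i (derivOf δ η k) :=
  thetaApply_add_single hcomm _ _ _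

theorem map_mem_thetaSet_succ (hcomm : ∀ i j, Function.Commute (δ i) (δ j)) (i : Fin m) {s : ℕ}
    {x : L} (hx : x ∈ thetaSet δ η s) : δ i x ∈ thetaSet δ η (s + 1) := by
  obtain ⟨k, hk, rfl⟩ := hx
  refine ⟨_, ?_, derivOf_add_single hcomm k i⟩
  simpa only [Set.mem_ofPred, sum_add_single] using Nat.succ_le_succ hk

end Theta

section Ranking

variable {m n : ℕ} {k l : (Fin m → ℕ) × Fin n}

/-- The orderly ranking of the derivatives `δ₁^(e 1) ⋯ δ_m^(e m) (η j)`, indexed by the pairs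
`(e, j)`: by order first, then lexicographically. -/
def derivRank (k : (Fin m → ℕ) × Fin n) : ℕ ×ₗ (Lex (Fin m → ℕ) ×ₗ Fin n) :=
  toLex (∑ i, k.1 i, toLex (toLex k.1, k.2))

theorem derivRank_injective : Function.Injective (derivRank (m := m) (n := n)) := by
  rintro ⟨e, j⟩ ⟨e', j'⟩ h
  simp only [derivRank, toLex_inj, Prod.mk.injEq] at h ⊢
  exact h.2

theorem order_le_of_derivRank_lt (h : derivRank k < derivRank l) :
    ∑ i, k.1 i ≤ ∑ i, l.1 i :=
  (Prod.Lex.toLex_lt_toLex.1 h).elim le_of_lt fun h ↦ h.1.le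

theorem derivRank_add_single_lt (i : Fin m) (h : derivRank k < derivRank l) :
    derivRank (k.1 + Pi.single i 1, k.2) < derivRank (l.1 + Pi.single i 1, l.2) := by
  simpa only [derivRank, Prod.Lex.toLex_lt_toLex, sum_add_single, toLex_add, add_lt_add_iff_right,
    add_left_inj] using h

theorem derivRank_lt_add_single (k : (Fin m → ℕ) × Fin n) (i : Fin m) :
    derivRank k < derivRank (k.1 + Pi.single i 1, k.2) :=
  Prod.Lex.toLex_lt_toLex.2 <| Or.inl <| by
    simp only [sum_add_single, Nat.lt_add_one]

end Ranking

section Differential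

variable {L : Type*} [Field L] {m n n' : ℕ} {δ : Fin m → L → L} {K F : Subfield L}
  {η : Fin n → L} {ξ : Fin n' → L}

theorem diffTrdeg_eq_eRk (s : ℕ) :
    (diffTrdeg δ K η s : ℕ∞) = (matroid K L).eRk (thetaSet δ η s) := by
  rw [← trdegNat_adjoin_eq_eRk K (thetaSet_finite s), thetaSet_eq_setOf]
  rfl

theorem le_diffAdjoin (S : Set L) : K ≤ diffAdjoin δ K S :=
  le_sInf fun _ hF ↦ hF.2.1

theorem derivOf_mem (hcomm : ∀ i j, Function.Commute (δ i) (δ j)) (hF : IsDiffSubfield δ F)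
    (hη : Set.range η ⊆ F) (k : (Fin m → ℕ) × Fin n) : derivOf δ η k ∈ F := by
  obtain ⟨e, j⟩ := k
  induction e using exponent_induction with
  | zero =>
    rw [derivOf, thetaApply_zero]
    exact hη (Set.mem_range_self j)
  | add_single e i ih =>
    rw [derivOf_add_single hcomm (e, j)]
    exact hF i _ ih

theorem thetaSet_subset_diffAdjoin (hcomm : ∀ i j, Function.Commute (δ i) (δ j)) (s : ℕ) :
    thetaSet δ η s ⊆ diffAdjoin δ K (Set.range η) := by
  rintro _ ⟨k, -, rfl⟩
  exact Subfield.mem_sInf.2 fun F hF ↦ derivOf_mem hcomm hF.1 hF.2.2 k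

theorem diffAdjoin_le_closure (hδ : ∀ i, ∃ D : Derivation ℤ L L, ⇑D = δ i)
    (hcomm : ∀ i j, Function.Commute (δ i) (δ j)) (hK : IsDiffSubfield δ K) :
    diffAdjoin δ K (Set.range η) ≤ Subfield.closure ((K : Set L) ∪ ⋃ s, thetaSet δ η s) := by
  refine sInf_le ⟨fun i x hx ↦ ?_, fun x hx ↦ Subfield.subset_closure (Or.inl hx), ?_⟩
  · obtain ⟨D, hD⟩ := hδ i
    rw [← hD]
    refine derivation_mem_of_mem_subfieldClosure Subfield.subset_closure ?_ hx
    rintro y (hy | hy)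
    · exact Subfield.subset_closure (Or.inl (hD ▸ hK i y hy))
    · obtain ⟨s, hs⟩ := Set.mem_iUnion.1 hy
      exact Subfield.subset_closure
        (Or.inr (Set.mem_iUnion.2 ⟨s + 1, hD ▸ map_mem_thetaSet_succ hcomm i hs⟩))
  · rintro _ ⟨j, rfl⟩
    exact Subfield.subset_closure
      (Or.inr (Set.mem_iUnion.2 ⟨0, (0, j), by simp, thetaApply_zero δ _⟩))

theorem diffTrdeg_add_le_diffTrdeg_append (hcomm : ∀ i j, Function.Commute (δ i) (δ j)) (s : ℕ) :
    diffTrdeg δ K η s + diffTrdeg δ (diffAdjoin δ K (Set.range η)) ξ s ≤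
      diffTrdeg δ K (Fin.append η ξ) s := by
  have h := eRk_add_eRk_le_eRk_union_of_subset (le_diffAdjoin (Set.range η))
    (thetaSet_subset_diffAdjoin (K := K) hcomm s) (thetaSet δ ξ s)
  rw [← thetaSet_append, ← diffTrdeg_eq_eRk, ← diffTrdeg_eq_eRk, ← diffTrdeg_eq_eRk] at h
  exact_mod_cast h

/-- The derivatives of the family `η` whose index is ranked below `k`. -/
def lowerDerivs (δ : Fin m → L → L) (η : Fin n → L) (k : (Fin m → ℕ) × Fin n) : Set L :=
  derivOf δ η '' {i | derivRank i < derivRank k}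

theorem derivOf_add_mem_closure [CharZero L] (hδ : ∀ i, ∃ D : Derivation ℤ L L, ⇑D = δ i)
    (hcomm : ∀ i j, Function.Commute (δ i) (δ j)) (hK : IsDiffSubfield δ K)
    {c : ℕ} {e : Fin m → ℕ} {j : Fin n'}
    (h : derivOf δ ξ (e, j) ∈
      (matroid K L).closure (thetaSet δ η c ∪ lowerDerivs δ ξ (e, j))) (f : Fin m → ℕ) :
    derivOf δ ξ (e + f, j) ∈ (matroid K L).closure
      (thetaSet δ η (c + ∑ i, f i) ∪ lowerDerivs δ ξ (e + f, j)) := by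
  induction f using exponent_induction with
  | zero => simpa using h
  | add_single f i ih =>
    obtain ⟨D, hD⟩ := hδ i
    rw [sum_add_single, ← add_assoc, ← add_assoc, derivOf_add_single hcomm (e + f, j), ← hD]
    refine derivation_mem_matroid_closure (hD ▸ hK i) ?_ ?_ ih
    · exact (Set.union_subset_union (thetaSet_mono (Nat.le_succ _)) (Set.image_mono fun k hk ↦
        hk.trans (derivRank_lt_add_single _ i))).trans ((matroid K L).subset_closure _)
    · rintro x (hx | ⟨k, hk, rfl⟩) <;> rw [hD] <;> refine (matroid K L).mem_closure_of_mem ?_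
      · exact Or.inl (map_mem_thetaSet_succ hcomm i hx)
      · exact Or.inr ⟨_, derivRank_add_single_lt i hk, derivOf_add_single hcomm k i⟩

theorem exists_mem_closure_thetaSet {S : Set L} {x : L}
    (hF : F ≤ Subfield.closure ((K : Set L) ∪ ⋃ s, thetaSet δ η s))
    (hx : x ∈ (matroid F L).closure S) :
    ∃ c, x ∈ (matroid K L).closure (thetaSet δ η c ∪ S) := by
  have hxU : x ∈ (matroid K L).closure (⋃ c, (thetaSet δ η c ∪ S)) := by
    rw [← Set.iUnion_union]
    exact matroid_closure_subset_of_le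
      (hF.trans (Subfield.closure_mono (Set.union_subset_union_right _ Set.subset_union_left)))
      (fun y hy ↦ Subfield.subset_closure (Or.inr (Or.inr hy))) hx
  obtain ⟨I, hI, hfin, -, hxI⟩ := Matroid.exists_mem_finite_closure_of_mem_closure hxU
  have hmono : Monotone fun c ↦ thetaSet δ η c ∪ S :=
    fun c d hcd ↦ Set.union_subset_union_left _ (thetaSet_mono hcd)
  obtain ⟨c, hc⟩ := hmono.directed_le.exists_mem_subset_of_finset_subset_biUnion
    (s := hfin.toFinset) (by simpa using hI)
  exact ⟨c, (matroid K L).closure_subset_closure (by simpa using hc) hxI⟩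

theorem exists_derivOf_mem_closure [CharZero L] (hδ : ∀ i, ∃ D : Derivation ℤ L L, ⇑D = δ i)
    (hcomm : ∀ i j, Function.Commute (δ i) (δ j)) (hK : IsDiffSubfield δ K)
    (hF : F ≤ Subfield.closure ((K : Set L) ∪ ⋃ s, thetaSet δ η s)) (ξ : Fin n' → L) :
    ∃ c, ∀ k, derivOf δ ξ k ∈ (matroid F L).closure (lowerDerivs δ ξ k) →
      derivOf δ ξ k ∈
        (matroid K L).closure (thetaSet δ η (∑ i, k.1 i + c) ∪ lowerDerivs δ ξ k) := by
  have hmono (k) : Monotone fun c ↦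
      (matroid K L).closure (thetaSet δ η c ∪ lowerDerivs δ ξ k) := fun _ _ hcd ↦
    (matroid K L).closure_subset_closure (Set.union_subset_union_left _ (thetaSet_mono hcd))
  choose c hc using fun j : Fin n' ↦ exists_forall_exists_le_of_monotone
    (P := fun c e ↦ derivOf δ ξ (e, j) ∈
      (matroid K L).closure (thetaSet δ η c ∪ lowerDerivs δ ξ (e, j)))
    fun _ _ hcd e he ↦ hmono (e, j) hcd he
  refine ⟨Finset.univ.sup c, fun ⟨e, j⟩ hk ↦ ?_⟩
  obtain ⟨c', hc'⟩ := exists_mem_closure_thetaSet hF hk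
  obtain ⟨t, hte, ht⟩ := hc j c' e hc'
  obtain ⟨f, rfl⟩ := exists_add_of_le hte
  refine hmono _ ?_ (derivOf_add_mem_closure hδ hcomm hK ht f)
  calc c j + ∑ i, f i ≤ Finset.univ.sup c + (∑ i, t i + ∑ i, f i) :=
        add_le_add (Finset.le_sup (Finset.mem_univ j)) (Nat.le_add_left _ _)
    _ = ∑ i, (t + f) i + Finset.univ.sup c := by
        rw [add_comm, ← Finset.sum_add_distrib]
        rfl

theorem exists_diffTrdeg_append_le [CharZero L] (hδ : ∀ i, ∃ D : Derivation ℤ L L, ⇑D = δ i)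
    (hcomm : ∀ i j, Function.Commute (δ i) (δ j)) (hK : IsDiffSubfield δ K) :
    ∃ c, ∀ s, diffTrdeg δ K (Fin.append η ξ) s ≤
      diffTrdeg δ K η (s + c) + diffTrdeg δ (diffAdjoin δ K (Set.range η)) ξ s := by
  obtain ⟨c, hc⟩ := exists_derivOf_mem_closure hδ hcomm hK (diffAdjoin_le_closure hδ hcomm hK) ξ
  refine ⟨c, fun s ↦ ?_⟩
  set S := (finite_setOf_order_le (m := m) (n := n') s).toFinset
  have hmem {k} : k ∈ S ↔ ∑ i, k.1 i ≤ s := Set.Finite.mem_toFinset _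
  have hS : derivOf δ ξ '' S = thetaSet δ ξ s := by
    rw [Set.Finite.coe_toFinset, thetaSet]
  have h := eRk_union_image_le (M := matroid K L) (A := thetaSet δ η (s + c))
    (N := matroid (diffAdjoin δ K (Set.range η)) L) (S := S) (v := derivOf δ ξ)
    derivRank_injective (by simp)
    (fun k hk i hik ↦ hmem.2 ((order_le_of_derivRank_lt hik).trans (hmem.1 hk)))
    (fun k hk hcl ↦ (matroid K L).closure_subset_closure (Set.union_subset_union_left _
      (thetaSet_mono (Nat.add_le_add_right (hmem.1 hk) c))) (hc k hcl))
  rw [hS, ← diffTrdeg_eq_eRk, ← diffTrdeg_eq_eRk] at h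
  have hle : thetaSet δ (Fin.append η ξ) s ⊆ thetaSet δ η (s + c) ∪ thetaSet δ ξ s := by
    rw [thetaSet_append]
    exact Set.union_subset_union_left _ (thetaSet_mono (Nat.le_add_right s c))
  have hrank := ((matroid K L).eRk_mono hle).trans h
  rw [← diffTrdeg_eq_eRk] at hrank
  exact_mod_cast hrank

end Differential

section Growth

theorem degree_taylor_sub_self_lt {R : Type*} [CommRing R] (q : R[X]) (c : R) :
    (taylor c q - q).degree < q.natDegree := by
  rw [degree_lt_iff_coeff_zero]
  intro k hk
  rw [coeff_sub, sub_eq_zero]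
  rcases hk.eq_or_lt with rfl | hk
  · exact coeff_taylor_natDegree c q
  · rw [coeff_eq_zero_of_natDegree_lt hk, coeff_eq_zero_of_natDegree_lt (by rwa [natDegree_taylor])]

variable {𝕜 : Type*} [NormedField 𝕜] [LinearOrder 𝕜] [IsStrictOrderedRing 𝕜] [OrderTopology 𝕜]
  {f g p q r : 𝕜[X]} {c : 𝕜}

theorem degree_le_of_frequently_le
    (h : ∃ᶠ x in atTop, 0 ≤ f.eval x ∧ f.eval x ≤ g.eval x) : f.degree ≤ g.degree := by
  by_contra! hlt
  have hsmall := (div_tendsto_atTop_zero_of_degree_lt g f hlt).eventually_lt_const one_pos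
  have hne := f.eventually_atTop_not_isRoot (ne_zero_of_degree_gt hlt)
  obtain ⟨x, ⟨hf, hfg⟩, hx, hfx⟩ := (h.and_eventually (hsmall.and hne)).exists
  exact hfg.not_gt ((div_lt_one (hf.lt_of_ne' hfx)).1 hx)

theorem coeff_eq_add_of_frequently_le_shift
    (h : ∃ᶠ x in atTop, q.eval x + r.eval x ≤ p.eval x ∧
      p.eval x ≤ q.eval (x + c) + r.eval x) {k : ℕ} (hk : q.natDegree ≤ k) :
    p.coeff k = q.coeff k + r.coeff k := by
  have hle : (p - (q + r)).degree ≤ (taylor c q - q).degree := by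
    refine degree_le_of_frequently_le (h.mono fun x ⟨hlow, hupp⟩ ↦ ?_)
    simp only [eval_sub, eval_add, taylor_eval]
    exact ⟨sub_nonneg.2 hlow, by linarith only [hupp]⟩
  have hlt := hle.trans_lt ((degree_taylor_sub_self_lt q c).trans_le (Nat.cast_le.2 hk))
  rw [← coeff_add, ← sub_eq_zero, ← coeff_sub]
  exact coeff_eq_zero_of_degree_lt hlt

theorem degree_eq_max_of_frequently_le_shift
    (h : ∃ᶠ x in atTop, (0 ≤ q.eval x ∧ 0 ≤ r.eval x) ∧ q.eval x + r.eval x ≤ p.eval x ∧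
      p.eval x ≤ q.eval (x + c) + r.eval x) :
    p.degree = max q.degree r.degree := by
  refine le_antisymm ?_ (max_le ?_ ?_)
  · rw [← degree_taylor q c]
    refine (degree_le_of_frequently_le (h.mono ?_)).trans (degree_add_le _ _)
    rintro x ⟨⟨hq, hr⟩, hlow, hupp⟩
    rw [eval_add, taylor_eval]
    exact ⟨(add_nonneg hq hr).trans hlow, hupp⟩
  · exact degree_le_of_frequently_le (h.mono fun x ⟨⟨hq, hr⟩, hlow, _⟩ ↦
      ⟨hq, (le_add_of_nonneg_right hr).trans hlow⟩)
  · exact degree_le_of_frequently_le (h.mono fun x ⟨⟨hq, hr⟩, hlow, _⟩ ↦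
      ⟨hr, (le_add_of_nonneg_left hq).trans hlow⟩)

end Growth

theorem typical_dimension_add_of_eq_type_general
    {L : Type*} [Field L] [CharZero L] {m : ℕ} (δ : Fin m → L → L)
    (hadd : ∀ i : Fin m, ∀ x y : L, δ i (x + y) = δ i x + δ i y)
    (hleib : ∀ i : Fin m, ∀ x y : L, δ i (x * y) = x * δ i y + δ i x * y)
    (hcomm : ∀ i j : Fin m, ∀ x : L, δ i (δ j x) = δ j (δ i x))
    (K : Subfield L) (hK : IsDiffSubfield δ K)
    {n₁ n₂ : ℕ} (a : Fin n₁ → L) (b : Fin n₂ → L)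
    (p q r : ℚ[X])
    (hp : IsKolchinPoly δ K (Fin.append a b) p)
    (hq : IsKolchinPoly δ K a q)
    (hr : IsKolchinPoly δ (diffAdjoin δ K (Set.range a)) b r) :
    p.degree = max q.degree r.degree ∧
      ∀ k, q.natDegree ≤ k → p.coeff k = q.coeff k + r.coeff k := by
  obtain ⟨c, hc⟩ := exists_diffTrdeg_append_le (η := a) (ξ := b)
    (fun i ↦ exists_derivation_coe_eq (hadd i) (hleib i)) hcomm hK
  have hfreq : ∃ᶠ x : ℚ in atTop, (0 ≤ q.eval x ∧ 0 ≤ r.eval x) ∧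
      q.eval x + r.eval x ≤ p.eval x ∧ p.eval x ≤ q.eval (x + c) + r.eval x := by
    refine tendsto_natCast_atTop_atTop.frequently (Eventually.frequently ?_)
    filter_upwards [eventually_atTop.2 hp, eventually_atTop.2 hq,
      (tendsto_add_atTop_nat c).eventually (eventually_atTop.2 hq), eventually_atTop.2 hr]
      with s hps hqs hqsc hrs
    have hlow := diffTrdeg_add_le_diffTrdeg_append (K := K) (η := a) (ξ := b) hcomm s
    rw [← Nat.cast_add, hps, hqs, hqsc, hrs]
    exact ⟨⟨Nat.cast_nonneg _, Nat.cast_nonneg _⟩, mod_cast hlow, mod_cast hc s⟩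
  exact ⟨degree_eq_max_of_frequently_le_shift hfreq,
    fun k ↦ coeff_eq_add_of_frequently_le_shift (hfreq.mono fun _ ↦ And.right)⟩

/-- If `τ(a/K) = τ(b/K⟨a⟩)` then `τ((a,b)/K) = τ(a/K)` and the typical differential dimensions
add: `α((a,b)/K) = α(a/K) + α(b/K⟨a⟩)`. -/
theorem typical_dimension_add_of_eq_type
    {L : Type*} [Field L] [CharZero L] {m : ℕ} (hm : 1 ≤ m)
    (δ : Fin m → L → L)
    (hadd : ∀ i : Fin m, ∀ x y : L, δ i (x + y) = δ i x + δ i y)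
    (hleib : ∀ i : Fin m, ∀ x y : L, δ i (x * y) = x * δ i y + δ i x * y)
    (hcomm : ∀ i j : Fin m, ∀ x : L, δ i (δ j x) = δ j (δ i x))
    (K : Subfield L) (hK : IsDiffSubfield δ K)
    {n₁ n₂ : ℕ} (a : Fin n₁ → L) (b : Fin n₂ → L)
    (p q r : ℚ[X])
    (hp : IsKolchinPoly δ K (Fin.append a b) p)
    (hq : IsKolchinPoly δ K a q)
    (hr : IsKolchinPoly δ (diffAdjoin δ K (Set.range a)) b r)
    (hdeg : q.degree = r.degree) :
    p.degree = q.degree ∧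
      (p.natDegree.factorial : ℚ) * p.leadingCoeff =
        (q.natDegree.factorial : ℚ) * q.leadingCoeff +
          (r.natDegree.factorial : ℚ) * r.leadingCoeff := by
  obtain ⟨hdegp, hcoeff⟩ :=
    typical_dimension_add_of_eq_type_general δ hadd hleib hcomm K hK a b p q r hp hq hr
  rw [← hdeg, max_self] at hdegp
  have hqp := natDegree_eq_natDegree hdegp
  have hqr := natDegree_eq_natDegree hdeg
  refine ⟨hdegp, ?_⟩
  rw [leadingCoeff, hcoeff _ hqp.ge, hqp, mul_add, leadingCoeff, leadingCoeff, ← hqr]
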